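/- arXiv:2203.14503 — 4 statements merged into one kernel-verified Lean document; each statement's English description precedes it below -/
import Mathlib

section
/- Let T : Z_3^N → Z_3^N be the cyclic coordinate shift defined by (Tv)(i) = v(i+1) for 1 ≤ i ≤ N−1 and (Tv)(N) = v(1). Then the family B is invariant under T: for every subcube Q ∈ B, the image T(Q) = {Tv : v ∈ Q} again belongs to B. -/
/-!
Index positions by `0, …, N - 1` and write `σ i = i + 1 mod N`. The side of a component of `P_K` flips between positions `i` and `i + 1`
exactly when `i + 1 ∈ K`. Since `|K|` is even, the same rule also holds across the wrap-around from
position `N - 1` to position `0` (`side_last`), so the rule is cyclically symmetric. Hence `T` maps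
the cube with data `(K, b)` to the one with data `(σ⁻¹ K, side of P_K at position 1)`.
-/

open scoped BigOperators

namespace SNL

/-- `side N K b i` is `false` if the `i`-th component (0-based) of the subcube `P_K`
(`b = false` for `C`, `b = true` for `D`) is of "low" type (`{0}` or `{0,1}`),
and `true` if it is of "high" type (`{2}` or `{1,2}`), following the recursive
definition: the first component is low for `C` and high for `D`, and the type flips
from component `i` to `i+1` exactly when coordinate `i+1` belongs to `K`. -/
def side (N : ℕ) (K : Finset (Fin N)) (b : Bool) : ℕ → Bool
  | 0 => b
  | i + 1 => Bool.xor (side N K b i) (decide ((i + 1) ∈ K.image Fin.val))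

/-- The `i`-th component of the subcube `C_K` (`b = false`) or `D_K` (`b = true`). -/
def comp (N : ℕ) (K : Finset (Fin N)) (b : Bool) (i : Fin N) : Finset (Fin 3) :=
  if i ∈ K then (if side N K b i.val then {1, 2} else {0, 1})
  else (if side N K b i.val then {2} else {0})

/-- The subcube `C_K` (`b = false`) or `D_K` (`b = true`) as a set of vectors. -/
def cube (N : ℕ) (K : Finset (Fin N)) (b : Bool) : Set (Fin N → Fin 3) :=
  {v | ∀ i, v i ∈ comp N K b i}

/-- The central subcube `B₀ = {1} × ⋯ × {1}`. -/
def B0 (N : ℕ) : Set (Fin N → Fin 3) := {v | ∀ i, v i = 1}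

/-- The family `B` consisting of `B₀` together with `C_K`, `D_K` for all even `K`. -/
def family (N : ℕ) : Set (Set (Fin N → Fin 3)) :=
  {B0 N} ∪ {S | ∃ K b, Even K.card ∧ S = cube N K b}

/-- The sign `±1` attached to a Boolean sign vector (`true ↦ +1`, `false ↦ -1`). -/
def sgn (N : ℕ) (ε : Fin N → Bool) (i : Fin N) : ℂ := if ε i then 1 else -1

/-- The local factor `g_i` of the product state `|P_K; ε⟩`. -/
def gfun (N : ℕ) (K : Finset (Fin N)) (b : Bool) (ε : Fin N → Bool) (i : Fin N) :
    Fin 3 → ℂ :=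
  if i ∈ K then
    (if side N K b i.val then (fun t => if t = 1 then 1 else if t = 2 then sgn N ε i else 0)
     else (fun t => if t = 0 then 1 else if t = 1 then sgn N ε i else 0))
  else
    (if side N K b i.val then (fun t => if t = 2 then 1 else 0)
     else (fun t => if t = 0 then 1 else 0))

/-- The product state `|P_K; ε⟩` as a function `Z₃^N → ℂ`. -/
def prodState (N : ℕ) (K : Finset (Fin N)) (b : Bool) (ε : Fin N → Bool) :
    (Fin N → Fin 3) → ℂ :=
  fun v => ∏ i, gfun N K b ε i (v i)

/-- The inner product on `H = (Z₃^N → ℂ)`. -/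
noncomputable def innerH (N : ℕ) (ψ φ : (Fin N → Fin 3) → ℂ) : ℂ :=
  ∑ v, (starRingEnd ℂ) (ψ v) * φ v

/-- The state `|B₀⟩`, the indicator function of the all-ones vector. -/
def B0state (N : ℕ) : (Fin N → Fin 3) → ℂ :=
  fun v => if v = (fun _ => 1) then 1 else 0

/-- A product vector in `H`. -/
def IsProdVec (N : ℕ) (ψ : (Fin N → Fin 3) → ℂ) : Prop :=
  ∃ f : Fin N → Fin 3 → ℂ, ∀ v, ψ v = ∏ i, f i (v i)

/-- The stopper state `|S⟩ = (|0⟩+|1⟩+|2⟩)^{⊗N}`, i.e. the constant function 1. -/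
def stateS (N : ℕ) : (Fin N → Fin 3) → ℂ := fun _ => 1

/-- The orthogonal product set `O` of the `3^N - 1` states `|P_K; ε⟩`. -/
def setO (N : ℕ) : Set ((Fin N → Fin 3) → ℂ) :=
  {ψ | ∃ K b ε, Even K.card ∧ ψ = prodState N K b ε}

/-- The unextendible product basis `U`. -/
def setU (N : ℕ) : Set ((Fin N → Fin 3) → ℂ) :=
  {stateS N} ∪
    {ψ | ∃ K b ε, Even K.card ∧ (∃ i ∈ K, ε i = false) ∧ ψ = prodState N K b ε}

/-- Restriction of a vector to the coordinates other than `m`. -/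
def res (N : ℕ) (m : Fin N) (v : Fin N → Fin 3) : {i : Fin N // i ≠ m} → Fin 3 :=
  fun j => v j.1

/-- The operator `I_m ⊗ E` on `H`, where `E` is a matrix acting on the joint party
of all subsystems except `m`. -/
noncomputable def opIE (N : ℕ) (m : Fin N)
    (E : Matrix ({i : Fin N // i ≠ m} → Fin 3) ({i : Fin N // i ≠ m} → Fin 3) ℂ)
    (ψ : (Fin N → Fin 3) → ℂ) : (Fin N → Fin 3) → ℂ :=
  fun v => ∑ v' : Fin N → Fin 3,
    if v' m = v m then E (res N m v) (res N m v') * ψ v' else 0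

end SNL

namespace SNL

lemma card_filter_lt_succ (N : ℕ) (K : Finset (Fin N)) (i : ℕ) :
    (K.filter (fun j => j.val < i + 1)).card =
      (K.filter (fun j => j.val < i)).card + if i ∈ K.image Fin.val then 1 else 0 := by
  split_ifs with h
  · obtain ⟨x, hx, rfl⟩ := Finset.mem_image.1 h
    rw [← Finset.card_insert_of_notMem (a := x) (by simp)]
    congr 1
    ext j
    simp only [Finset.mem_filter, Finset.mem_insert, Fin.ext_iff]
    constructor
    · rintro ⟨h1, h2⟩
      by_cases h3 : j.val = x.val
      · exact Or.inl h3
      · exact Or.inr ⟨h1, by omega⟩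
    · rintro (h1 | h1)
      · exact ⟨by rwa [Fin.ext h1], by omega⟩
      · exact ⟨h1.1, by omega⟩
  · rw [add_zero]
    congr 1
    refine Finset.filter_congr fun j hj => ?_
    have : j.val ≠ i := fun e => h (Finset.mem_image.2 ⟨j, hj, e⟩)
    omega

/-- The side at position `i` is determined by the parity of `K ∩ {0, …, i}`; the element `0` of `K`
is counted on both sides because it does not cause a flip in the recursion. -/
lemma side_xor_bodd (N : ℕ) (K : Finset (Fin N)) (b : Bool) (i : ℕ) :
    Bool.xor (side N K b i) (Nat.bodd (K.filter (fun j => j.val < i + 1)).card) =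
      Bool.xor b (decide (0 ∈ K.image Fin.val)) := by
  induction i with
  | zero =>
    rw [card_filter_lt_succ]
    by_cases h : 0 ∈ K.image Fin.val <;> simp only [h] <;> simp [side]
  | succ i ih =>
    rw [card_filter_lt_succ, ← ih, side, Nat.bodd_add]
    by_cases h : i + 1 ∈ K.image Fin.val <;> simp only [h] <;> simp

/-- For `K` of even cardinality, the flip rule also holds from the last position to the first. -/
lemma side_last (n : ℕ) (K : Finset (Fin (n + 1))) (b : Bool) (hK : Even K.card) :
    side (n + 1) K b n = Bool.xor b (decide (0 ∈ K.image Fin.val)) := by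
  rw [← side_xor_bodd (n + 1) K b n, Finset.filter_true_of_mem fun j _ => j.isLt]
  obtain ⟨m, hm⟩ := hK
  simp [hm]

lemma mem_image_val {N : ℕ} (K : Finset (Fin N)) (i : Fin N) :
    i.val ∈ K.image Fin.val ↔ i ∈ K := by
  simp [Fin.val_inj]

/-- The sides of the cube with data `(σ⁻¹ K, side of P_K at position 1)` are those of `P_K` shifted by
one position; the wrap-around at `i = n` is `side_last`. -/
lemma side_shift (n : ℕ) (hn : 0 < n) (K : Finset (Fin (n + 1))) (b : Bool) (hK : Even K.card)
    (σ : Equiv.Perm (Fin (n + 1))) (hσ : ∀ i, (σ i).val = (i.val + 1) % (n + 1)) (i : ℕ)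
    (hi : i < n + 1) :
    side (n + 1) (K.image σ.symm) (side (n + 1) K b 1) i =
      side (n + 1) K b ((i + 1) % (n + 1)) := by
  induction i with
  | zero => rw [Nat.mod_eq_of_lt (by omega)]; rfl
  | succ i ih =>
    have key : i + 1 ∈ (K.image σ.symm).image Fin.val ↔
        (i + 1 + 1) % (n + 1) ∈ K.image Fin.val := by
      rw [← hσ ⟨i + 1, hi⟩, mem_image_val K]
      refine (mem_image_val (K.image σ.symm) ⟨i + 1, hi⟩).trans ?_
      simp [Equiv.symm_apply_eq]
    rw [side, ih (by omega), Nat.mod_eq_of_lt hi]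
    by_cases h : i + 1 = n
    · subst h
      rw [Nat.mod_self] at key ⊢
      rw [side_last _ K b hK]
      simp only [key]
      simp [side]
    · rw [Nat.mod_eq_of_lt (by omega : i + 1 + 1 < n + 1)] at key ⊢
      rw [decide_eq_decide.2 key]
      rfl

/-- The family `B` is invariant under the cyclic coordinate shift
`(T v)(i) = v(i+1)` (indices cyclic mod `N`): the image of every subcube
in `B` under `T` again belongs to `B`. -/
theorem family_cyclic_invariant (N : ℕ) (hodd : Odd N) (hN : 3 ≤ N)
    (Q : Set (Fin N → Fin 3)) (hQ : Q ∈ family N) :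
    (fun v : Fin N → Fin 3 =>
        fun i : Fin N => v ⟨(i.val + 1) % N, Nat.mod_lt _ (by omega)⟩) '' Q
      ∈ family N := by
  obtain ⟨n, rfl⟩ : ∃ n, N = n + 1 := ⟨N - 1, by omega⟩
  let f : Fin (n + 1) → Fin (n + 1) := fun i => ⟨(i.val + 1) % (n + 1), Nat.mod_lt _ (by omega)⟩
  have hf : Function.Injective f := by
    intro i j h
    have h' : (i.val + 1) % (n + 1) = (j.val + 1) % (n + 1) := congrArg Fin.val h
    have h2 : i.val % (n + 1) = j.val % (n + 1) := Nat.ModEq.add_right_cancel' 1 h'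
    rw [Nat.mod_eq_of_lt i.isLt, Nat.mod_eq_of_lt j.isLt] at h2
    exact Fin.ext h2
  let σ : Equiv.Perm (Fin (n + 1)) := Equiv.ofBijective f (Finite.injective_iff_bijective.1 hf)
  have hσ : ∀ i, (σ i).val = (i.val + 1) % (n + 1) := fun i => rfl
  change (fun v : Fin (n + 1) → Fin 3 => fun i => v (σ i)) '' Q ∈ family (n + 1)
  -- The image of a product set is the product of the shifted components.
  have himg : ∀ E : Fin (n + 1) → Finset (Fin 3),
      (fun v : Fin (n + 1) → Fin 3 => fun i => v (σ i)) '' {v | ∀ i, v i ∈ E i} =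
        {v | ∀ i, v i ∈ E (σ i)} := by
    intro E
    ext w
    constructor
    · rintro ⟨v, hv, rfl⟩ i
      exact hv (σ i)
    · intro hw
      refine ⟨fun i => w (σ.symm i), fun i => ?_, by simp⟩
      simpa using hw (σ.symm i)
  rcases hQ with hQ | ⟨K, b, hK, rfl⟩
  · left
    rw [Set.mem_singleton_iff] at hQ ⊢
    subst hQ
    simpa [B0] using himg fun _ => {1}
  · right
    refine ⟨K.image σ.symm, side (n + 1) K b 1, ?_, ?_⟩
    · rwa [Finset.card_image_of_injective _ σ.symm.injective]
    · rw [cube, himg, cube]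
      have hcomp : ∀ i, comp (n + 1) K b (σ i) =
          comp (n + 1) (K.image σ.symm) (side (n + 1) K b 1) i := by
        intro i
        have hmem : i ∈ K.image σ.symm ↔ σ i ∈ K := by simp [Equiv.symm_apply_eq]
        simp only [comp, hmem, side_shift n (by omega) K b hK σ hσ i i.isLt, hσ]
      simp only [hcomp]

end SNL
end

section
/- The 3^N vectors consisting of |B_0⟩ together with all product states |P_K;ε⟩ for K ∈ Λ, P ∈ {C,D}, ε : K → {+1,−1} are pairwise orthogonal and nonzero; consequently they form an orthogonal basis of H. -/
/-!
The sides of a subcube are read cyclically. For even `K` write `s i` for the side of the `i`-th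
component. Then `i ∈ K` exactly when `s i ≠ s (i - 1)`, with indices modulo `N`: for `i ≠ 0` this is
the recursion, and for `i = 0` it says that the number of flips around the cycle is even
(`mem_iff_side_ne`). Hence `v` lies in the subcube exactly when `s i` is forced by `v i` at every
`i` with `v i ≠ 1` and `s i` is the negation of `s (i - 1)` at every `i` with `v i = 1`
(`side_succ_eq_step`). If some `v i ≠ 1`, running this rule around the cycle gives exactly one
solution `s`, so `v` lies in exactly one subcube (`cube_unique`, `exists_mem_cube`). The all-ones
vector lies in none: it would force `K` to be everything, which has odd cardinality.

Distinct subcubes are therefore disjoint, so product states on distinct subcubes have disjoint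
supports. On one subcube the inner product factors over the coordinates, and a coordinate of `K`
where the signs differ contributes `1 - 1 = 0`. For the span, each basis vector supported at a point
of a subcube is a product of one-coordinate indicators, each a combination of the two local factors
with opposite signs; multiplying out gives a combination of product states
(`single_mem_span`).
-/


open scoped BigOperators

namespace SNL

/-! ### Sides around the cycle -/

/-- The parity of the flips made after component `0` determines the side. -/
lemma side_eq_parity (N : ℕ) (K : Finset (Fin N)) (b : Bool) (i : ℕ) :
    side N K b i = Bool.xor b (decide (Odd (∑ j ∈ Finset.range i,
      if (j + 1) ∈ K.image Fin.val then 1 else 0))) := by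
  induction i with
  | zero => simp [side]
  | succ i ih =>
    rw [side, ih, Finset.sum_range_succ]
    by_cases h : (i + 1) ∈ K.image Fin.val
    · simp only [h, if_true, decide_true, Nat.odd_add_one]
      rw [decide_not]
      simp
    · simp only [h, if_false, decide_false, add_zero, Bool.xor_false]

lemma card_eq_sum (N : ℕ) (K : Finset (Fin N)) :
    K.card = ∑ j ∈ Finset.range N, if j ∈ K.image Fin.val then 1 else 0 := by
  rw [← Finset.card_image_of_injective K Fin.val_injective, ← Finset.card_filter]
  congr 1
  ext j
  simp only [Finset.mem_image, Finset.mem_filter, Finset.mem_range]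
  constructor
  · rintro ⟨a, ha, rfl⟩
    exact ⟨a.2, a, ha, rfl⟩
  · exact fun h => h.2

/-- `K` is even exactly when the cyclic flip rule also holds at component `0`. -/
lemma even_card_iff (M : ℕ) (K : Finset (Fin (M + 1))) (b : Bool) :
    Even K.card ↔ decide (0 ∈ K.image Fin.val) =
      Bool.xor (side (M + 1) K b 0) (side (M + 1) K b M) := by
  rw [card_eq_sum, Finset.sum_range_succ', side_eq_parity _ _ _ M, side]
  generalize (∑ j ∈ Finset.range M, if (j + 1) ∈ K.image Fin.val then 1 else 0) = m
  by_cases h : 0 ∈ K.image Fin.val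
  · simp only [h, if_true, decide_true, Nat.even_add_one, Nat.not_even_iff_odd]
    by_cases h2 : Odd m <;> cases b <;> simp [h2]
  · simp only [h, if_false, decide_false, add_zero, ← Nat.not_odd_iff_even]
    by_cases h2 : Odd m <;> cases b <;> simp [h2]

/-- The cyclic flip rule for even `K`, with positions on the cycle indexed by all of `ℕ`. -/
lemma mem_iff_side_ne {N : ℕ} (hN : 0 < N) {K : Finset (Fin N)} (hK : Even K.card) (b : Bool)
    (n : ℕ) : (⟨(n + 1) % N, Nat.mod_lt _ hN⟩ : Fin N) ∈ K ↔
      side N K b ((n + 1) % N) ≠ side N K b (n % N) := by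
  have himg : ∀ j (hj : j < N), j ∈ K.image Fin.val ↔ (⟨j, hj⟩ : Fin N) ∈ K := by
    intro j hj
    simp only [Finset.mem_image]
    constructor
    · rintro ⟨a, ha, rfl⟩
      exact ha
    · exact fun h => ⟨_, h, rfl⟩
  obtain ⟨M, rfl⟩ : ∃ M, N = M + 1 := ⟨N - 1, by omega⟩
  rw [← himg]
  by_cases h : n % (M + 1) = M
  · have h0 : (n + 1) % (M + 1) = 0 := by rw [Nat.add_mod, h]; cases M <;> simp
    have := (even_card_iff M K b).1 hK
    rw [h0, h]
    by_cases h2 : 0 ∈ K.image Fin.val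
    · simp only [h2, decide_true] at this
      simpa [h2] using this.symm
    · simp only [h2, decide_false] at this
      simpa [h2] using this.symm
  · have hlt := Nat.mod_lt n hN
    have h0 : (n + 1) % (M + 1) = n % (M + 1) + 1 := by
      rw [← Nat.mod_add_mod, Nat.mod_eq_of_lt (by omega)]
    rw [h0, side]
    by_cases h2 : n % (M + 1) + 1 ∈ K.image Fin.val <;> simp [h2]

/-! ### The subcubes partition the vectors other than the all-ones vector -/

lemma mem_comp {N : ℕ} {K : Finset (Fin N)} {b : Bool} {i : Fin N} {t : Fin 3} :
    t ∈ comp N K b i ↔ (t = 1 ∧ i ∈ K) ∨ t = if side N K b i.val then 2 else 0 := by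
  unfold comp
  by_cases h : i ∈ K <;> cases side N K b i.val <;> simp [h]
  exact or_comm

/-- The side of a component, given the entry there and the side of the preceding component:
`0` is low, `2` is high and `1` flips. -/
def step (t : Fin 3) (x : Bool) : Bool :=
  if t = 1 then !x else decide (t = 2)

lemma side_of_ne_one {N : ℕ} {K : Finset (Fin N)} {b : Bool} {v : Fin N → Fin 3}
    (hv : v ∈ cube N K b) {i : Fin N} (hi : v i ≠ 1) :
    side N K b i.val = decide (v i = 2) := by
  have := mem_comp.1 (hv i)
  cases hs : side N K b i.val <;> simp_all

lemma side_succ_eq_step {N : ℕ} (hN : 0 < N) {K : Finset (Fin N)} (hK : Even K.card) {b : Bool}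
    {v : Fin N → Fin 3} (hv : v ∈ cube N K b) (n : ℕ) :
    side N K b ((n + 1) % N) =
      step (v ⟨(n + 1) % N, Nat.mod_lt _ hN⟩) (side N K b (n % N)) := by
  unfold step
  split_ifs with h
  · have h1 := (mem_iff_side_ne hN hK b n).1 (by
      have := mem_comp.1 (hv ⟨(n + 1) % N, Nat.mod_lt _ hN⟩)
      rw [h] at this
      rcases this with h2 | h2
      · exact h2.2
      · split_ifs at h2 <;> simp at h2)
    exact Bool.eq_not.2 h1
  · exact side_of_ne_one hv h

lemma exists_ne_one {N : ℕ} (hodd : Odd N) {K : Finset (Fin N)} (hK : Even K.card) {b : Bool}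
    {v : Fin N → Fin 3} (hv : v ∈ cube N K b) : ∃ i, v i ≠ 1 := by
  by_contra! h
  have huniv : K = Finset.univ := by
    ext i
    have := mem_comp.1 (hv i)
    rw [h i] at this
    rcases this with h2 | h2
    · simp [h2.2]
    · split_ifs at h2 <;> simp at h2
  rw [huniv, Finset.card_fin] at hK
  exact Nat.not_even_iff_odd.2 hodd hK

/-- Distinct even subcubes are disjoint. -/
lemma cube_unique {N : ℕ} (hodd : Odd N) {K K' : Finset (Fin N)} (hK : Even K.card)
    (hK' : Even K'.card) {b b' : Bool} {v : Fin N → Fin 3} (hv : v ∈ cube N K b)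
    (hv' : v ∈ cube N K' b') : K = K' ∧ b = b' := by
  have hN : 0 < N := hodd.pos
  obtain ⟨p, hp⟩ := exists_ne_one hodd hK hv
  have key : ∀ m, side N K b ((p.val + m) % N) = side N K' b' ((p.val + m) % N) := by
    intro m
    induction m with
    | zero =>
      rw [add_zero, Nat.mod_eq_of_lt p.2, side_of_ne_one hv hp, side_of_ne_one hv' hp]
    | succ m ih =>
      rw [← add_assoc, side_succ_eq_step hN hK hv, side_succ_eq_step hN hK' hv', ih]
  have hall : ∀ n, side N K b (n % N) = side N K' b' (n % N) := by
    intro n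
    -- moving `n` a full number of turns forward puts it beyond `p`
    have h := key (n + N * p.val - p.val)
    have hle : p.val ≤ n + N * p.val := le_add_left (Nat.le_mul_of_pos_left _ hN)
    rwa [Nat.add_sub_cancel' hle, Nat.add_mul_mod_self_left] at h
  constructor
  · ext i
    have h1 := mem_iff_side_ne hN hK b (i.val + (N - 1))
    have h2 := mem_iff_side_ne hN hK' b' (i.val + (N - 1))
    rw [hall, hall, ← h2] at h1
    have hi : (⟨(i.val + (N - 1) + 1) % N, Nat.mod_lt _ hN⟩ : Fin N) = i := by
      apply Fin.ext
      change (i.val + (N - 1) + 1) % N = i.val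
      rw [add_assoc, Nat.sub_add_cancel hN, Nat.add_mod_right, Nat.mod_eq_of_lt i.2]
    rwa [hi] at h1
  · have := hall 0
    simpa [side] using this

/-- The sides obtained by applying the step rule to the word `u`, from the side `c` at
position `0`. -/
def run (u : ℕ → Fin 3) (c : Bool) : ℕ → Bool
  | 0 => c
  | n + 1 => step (u (n + 1)) (run u c n)

lemma run_eq_of_le {u : ℕ → Fin 3} {p : ℕ} (hp : u (p + 1) ≠ 1) (c c' : Bool) {n : ℕ}
    (hn : p + 1 ≤ n) : run u c n = run u c' n := by
  induction n, hn using Nat.le_induction with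
  | base => simp [run, step, hp]
  | succ n _ ih => rw [run, run, ih]

/-- Every vector with an entry different from `1` lies in some even subcube. -/
lemma exists_mem_cube {N : ℕ} (hN : 0 < N) {v : Fin N → Fin 3} (hv : ∃ i, v i ≠ 1) :
    ∃ K b, Even K.card ∧ v ∈ cube N K b := by
  obtain ⟨p, hp⟩ := hv
  obtain ⟨M, rfl⟩ : ∃ M, N = M + 1 := ⟨N - 1, by omega⟩
  set u : ℕ → Fin 3 := fun n => v ⟨n % (M + 1), Nat.mod_lt _ hN⟩ with hu
  have hu_per : ∀ n, u (n + (M + 1)) = u n := fun n => by simp [hu]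
  have hu_val : ∀ i : Fin (M + 1), u i.val = v i := fun i => by
    simp [hu, Nat.mod_eq_of_lt i.2]
  -- a full turn forgets the initial side, so starting from its end value `c` closes the cycle
  obtain ⟨q, hq, hqM⟩ : ∃ q, u (q + 1) ≠ 1 ∧ q + 1 ≤ M + 1 := by
    by_cases h : p.val = 0
    · refine ⟨M, ?_, le_rfl⟩
      have := hu_per 0
      rw [zero_add] at this
      rw [this, ← h, hu_val]
      exact hp
    · refine ⟨p.val - 1, ?_, by omega⟩
      rw [Nat.sub_add_cancel (by omega), hu_val]
      exact hp
  set c := run u false (M + 1) with hc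
  set f := run u c with hf
  have hper : ∀ n, f (n + (M + 1)) = f n := by
    intro n
    induction n with
    | zero =>
      rw [zero_add]
      exact run_eq_of_le hq c false hqM
    | succ n ih =>
      have h1 : f (n + 1 + (M + 1)) = step (u (n + 1 + (M + 1))) (f (n + (M + 1))) := by
        rw [show n + 1 + (M + 1) = (n + (M + 1)) + 1 by omega]
        rfl
      rw [h1, ih, hu_per]
      rfl
  set K : Finset (Fin (M + 1)) := Finset.univ.filter fun i => f (i.val + M + 1) ≠ f (i.val + M)
    with hKdef
  have hmem : ∀ j, j < M + 1 → (j ∈ K.image Fin.val ↔ f j ≠ f (j + M)) := by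
    intro j hj
    simp only [Finset.mem_image, hKdef, Finset.mem_filter, Finset.mem_univ, true_and]
    constructor
    · rintro ⟨a, ha, rfl⟩
      rwa [add_assoc, hper] at ha
    · intro h
      refine ⟨⟨j, hj⟩, ?_, rfl⟩
      rwa [add_assoc, hper]
  have hside : ∀ j, j < M + 1 → side (M + 1) K c j = f j := by
    intro j
    induction j with
    | zero => intro _; rfl
    | succ j ih =>
      intro hj
      have h1 := hmem (j + 1) hj
      rw [show j + 1 + M = j + (M + 1) by omega, hper] at h1
      rw [side, ih (by omega)]
      simp only [h1]
      cases f j <;> cases f (j + 1) <;> rfl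
  refine ⟨K, c, ?_, ?_⟩
  · rw [even_card_iff M K c, hside 0 hN, hside M (by omega)]
    have h1 := hmem 0 hN
    rw [zero_add] at h1
    simp only [h1]
    cases f 0 <;> cases f M <;> rfl
  · intro i
    rw [mem_comp, hside _ i.2]
    have hstep : f i.val = step (v i) (f (i.val + M)) := by
      rw [← hper, ← hu_val, ← hu_per]
      rfl
    by_cases h1 : v i = 1
    · left
      refine ⟨h1, ?_⟩
      rw [h1] at hstep
      simp only [hKdef, Finset.mem_filter, Finset.mem_univ, true_and]
      rw [add_assoc, hper, hstep]
      simp [step]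
    · right
      rw [hstep]
      unfold step
      generalize v i = t at h1
      fin_cases t <;> simp_all

/-! ### Product states -/

lemma gfun_ne_zero {N : ℕ} {K : Finset (Fin N)} {b : Bool} {ε : Fin N → Bool} {i : Fin N}
    {t : Fin 3} : gfun N K b ε i t ≠ 0 ↔ t ∈ comp N K b i := by
  unfold gfun comp sgn
  by_cases h : i ∈ K <;> cases side N K b i.val <;> cases ε i <;> fin_cases t <;> simp [h]

lemma prodState_ne_zero {N : ℕ} {K : Finset (Fin N)} {b : Bool} {ε : Fin N → Bool}
    {v : Fin N → Fin 3} : prodState N K b ε v ≠ 0 ↔ v ∈ cube N K b := by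
  unfold prodState cube
  simp [Finset.prod_ne_zero_iff, ← gfun_ne_zero (ε := ε)]

lemma innerH_prodState (N : ℕ) (K K' : Finset (Fin N)) (b b' : Bool) (ε ε' : Fin N → Bool) :
    innerH N (prodState N K b ε) (prodState N K' b' ε') =
      ∏ i, ∑ t, (starRingEnd ℂ) (gfun N K b ε i t) * gfun N K' b' ε' i t := by
  unfold innerH prodState
  rw [Finset.prod_univ_sum, Fintype.piFinset_univ]
  simp only [map_prod, Finset.prod_mul_distrib]

lemma sum_gfun_eq_zero {N : ℕ} {K : Finset (Fin N)} {b : Bool} {ε ε' : Fin N → Bool} {i : Fin N}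
    (hi : i ∈ K) (hε : ε i ≠ ε' i) :
    ∑ t, (starRingEnd ℂ) (gfun N K b ε i t) * gfun N K b ε' i t = 0 := by
  unfold gfun sgn
  cases side N K b i.val <;> cases h1 : ε i <;> cases h2 : ε' i <;>
    simp_all [Fin.sum_univ_three]

/-- The indicator of a point of the `i`-th component is a combination of the local factors with
the two signs at `i`; for `i ∉ K` these factors coincide. -/
lemma exists_local_coeff {N : ℕ} {K : Finset (Fin N)} {b : Bool} {i : Fin N} {t : Fin 3}
    (ht : t ∈ comp N K b i) :
    ∃ a : Bool → ℂ, ∀ x, (if x = t then (1 : ℂ) else 0) =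
      ∑ e, a e * gfun N K b (fun _ => e) i x := by
  -- the coefficients are `1/2` times the signs that `t` carries in the two factors
  refine ⟨fun e => gfun N K b (fun _ => e) i t / 2, fun x => ?_⟩
  unfold comp at ht
  unfold gfun sgn
  by_cases h : i ∈ K <;> cases hs : side N K b i.val <;> fin_cases t <;> fin_cases x <;>
    simp_all <;> norm_num

/-- Each coordinate indicator at a point of a subcube is a combination of the states on that
subcube. -/
lemma single_mem_span {N : ℕ} {K : Finset (Fin N)} {b : Bool} {v : Fin N → Fin 3}
    (hv : v ∈ cube N K b) :
    (Pi.single v 1 : (Fin N → Fin 3) → ℂ) ∈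
      Submodule.span ℂ (Set.range fun ε => prodState N K b ε) := by
  choose a ha using fun i => exists_local_coeff (hv i)
  have hsum : (Pi.single v 1 : (Fin N → Fin 3) → ℂ) =
      ∑ ε : Fin N → Bool, (∏ i, a i (ε i)) • prodState N K b ε := by
    funext x
    have hprod : (Pi.single v 1 : (Fin N → Fin 3) → ℂ) x =
        ∏ i, if x i = v i then (1 : ℂ) else 0 := by
      rw [Pi.single_apply, Finset.prod_ite_zero]
      simp [funext_iff]
    rw [hprod, Finset.prod_congr rfl fun i _ => ha i (x i), Finset.prod_univ_sum,
      Fintype.piFinset_univ, Finset.sum_apply]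
    refine Finset.sum_congr rfl fun ε _ => ?_
    rw [Finset.prod_mul_distrib]
    rfl
  rw [hsum]
  exact Submodule.sum_mem _ fun ε _ => Submodule.smul_mem _ _ (Submodule.subset_span ⟨ε, rfl⟩)

/-- The `3^N` vectors `|B₀⟩` together with all product states `|P_K; ε⟩`
(for even `K`, `P ∈ {C,D}`, sign vectors `ε`) are pairwise orthogonal and
nonzero; consequently they form an orthogonal basis of `H`. -/
theorem opb_of_decomposition (N : ℕ) (hodd : Odd N) (hN : 3 ≤ N) :
    (B0state N ≠ 0) ∧
    (∀ K : Finset (Fin N), ∀ b : Bool, ∀ ε : Fin N → Bool, Even K.card →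
        prodState N K b ε ≠ 0) ∧
    (∀ K : Finset (Fin N), ∀ b : Bool, ∀ ε : Fin N → Bool, Even K.card →
        innerH N (B0state N) (prodState N K b ε) = 0) ∧
    (∀ K K' : Finset (Fin N), ∀ b b' : Bool, ∀ ε ε' : Fin N → Bool,
        Even K.card → Even K'.card →
        prodState N K b ε ≠ prodState N K' b' ε' →
        innerH N (prodState N K b ε) (prodState N K' b' ε') = 0) ∧
    (Submodule.span ℂ
        ({B0state N} ∪ {ψ | ∃ K b ε, Even K.card ∧ ψ = prodState N K b ε}) = ⊤) := by
  have hN0 : 0 < N := by omega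
  refine ⟨?_, ?_, ?_, ?_, ?_⟩
  · intro h
    have := congrFun h (fun _ => 1)
    simp [B0state] at this
  · intro K b ε _ h
    -- the corner of the subcube given by the sides
    have hv : (fun i : Fin N => if side N K b i.val then (2 : Fin 3) else 0) ∈ cube N K b :=
      fun i => mem_comp.2 (Or.inr rfl)
    exact prodState_ne_zero.2 hv (congrFun h _)
  · intro K b ε hK
    refine Finset.sum_eq_zero fun v _ => ?_
    by_cases hv : prodState N K b ε v = 0
    · rw [hv, mul_zero]
    · obtain ⟨i, hi⟩ := exists_ne_one hodd hK (prodState_ne_zero.1 hv)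
      have : v ≠ fun _ => 1 := fun h => hi (congrFun h i)
      simp [B0state, this]
  · intro K K' b b' ε ε' hK hK' hne
    by_cases hsame : K = K' ∧ b = b'
    · obtain ⟨rfl, rfl⟩ := hsame
      have hi : ∃ i ∈ K, ε i ≠ ε' i := by
        by_contra! h
        apply hne
        funext v
        refine Finset.prod_congr rfl fun i _ => ?_
        by_cases hi : i ∈ K
        · simp [gfun, sgn, h i hi]
        · simp [gfun, hi]
      obtain ⟨i, hi, hε⟩ := hi
      rw [innerH_prodState]
      exact Finset.prod_eq_zero (Finset.mem_univ i) (sum_gfun_eq_zero hi hε)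
    · refine Finset.sum_eq_zero fun v _ => ?_
      by_contra h
      obtain ⟨h1, h2⟩ := mul_ne_zero_iff.1 h
      rw [map_ne_zero] at h1
      exact hsame (cube_unique hodd hK hK' (prodState_ne_zero.1 h1) (prodState_ne_zero.1 h2))
  · rw [eq_top_iff, ← (Pi.basisFun ℂ (Fin N → Fin 3)).span_eq, Submodule.span_le]
    rintro _ ⟨v, rfl⟩
    rw [Pi.basisFun_apply, SetLike.mem_coe]
    by_cases hv : ∃ i, v i ≠ 1
    · obtain ⟨K, b, hK, hmem⟩ := exists_mem_cube hN0 hv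
      refine Submodule.span_mono ?_ (single_mem_span hmem)
      rintro _ ⟨ε, rfl⟩
      exact Or.inr ⟨K, b, ε, hK, rfl⟩
    · push Not at hv
      refine Submodule.subset_span (Or.inl ?_)
      obtain rfl : v = fun _ => 1 := funext hv
      funext x
      rw [Pi.single_apply]
      rfl

end SNL
end

section
/- For every m ∈ {1,…,N} and every positive semidefinite operator E on H_m, if ⟨ψ, (I_m ⊗ E)φ⟩ = 0 for every pair of distinct states ψ, φ ∈ O, then E is a scalar multiple of the identity operator on H_m. (This is the operational content of the statement that the orthogonal product set O, of size 3^N − 1, is strongly nonlocal: for every bipartition separating one subsystem from the joint party of the remaining N−1 subsystems, every orthogonality-preserving POVM element of the joint party is trivial.) -/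
/-!
The index set `Fin (n + 1)` is read cyclically. Recording the low/high types of the components turns
a subcube `P_K` with `|K|` even into a word `s : Fin (n + 1) → Bool`, with
`K = {i | s i ≠ s (i - 1)}`; conversely every `s` arises, since a cyclic word changes value an even
number of times (`even_flips`). In these terms (`Mem`) a vector `v` lies in the cube of `s` when
`v i = 0` forces `s i` low, `v i = 2` forces `s i` high and `v i = 1` forces a change at `i`.
So a vector with `v m ≠ 1` lies in exactly one cube: reading cyclically from `m`, each `s i` is
determined by `v i` and `s (i - 1)` (`exists_mem`, `mem_unique`).

The states of one cube are, up to scaling, a character basis of the functions on it. Expanding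
delta functions in these bases (`expansion`), the orthogonality hypothesis gives two facts
about an entry `E u w`, where `u` and `w` are extended by a common value `x ≠ 1` at `m`:

* if the extensions lie in different cubes, then `E u w = 0` (`entry_eq_zero`);
* if they lie in the same cube `s`, and both `u i` and `w i` differ from `1` at a change `i` of `s`,
  then replacing both values by `1` leaves the entry unchanged (`entry_eq_update`), because the
  restriction of `I ⊗ E` to the cube is diagonal in the characters, hence translation invariant.

Use these with `x = 0` and `x = 2`, giving words `s₀`, `s₂` for `u`. If `w` has other words,
the entry vanishes. Otherwise, unless `u = w = (1, …, 1)`, consider the first position `i` after `m`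
with `s₀ i = s₂ i`. There `u i = w i ≠ 1`, and since `s₀`, `s₂` differ at `i - 1`, one of them
changes at `i`; so `u i` and `w i` may be replaced by `1`. Induction on the number of entries of
`u` different from `1` shows that `E u w` is `0` for `u ≠ w` and equals the entry at `(1, …, 1)`
for `u = w`.
-/

open scoped BigOperators Matrix

namespace SNL

/-- The set of positions at which the cyclic word `s` changes value; it plays the role of `K`. -/
def flips {n : ℕ} (s : Fin (n + 1) → Bool) : Finset (Fin (n + 1)) :=
  Finset.univ.filter fun i => s i ≠ s (i - 1)

/-- Membership of `v` in the subcube whose word of low (`false`) and high (`true`) types is `s`. -/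
def Mem {n : ℕ} (v : Fin (n + 1) → Fin 3) (s : Fin (n + 1) → Bool) : Prop :=
  ∀ i, (v i = 0 → s i = false) ∧ (v i = 2 → s i = true) ∧ (v i = 1 → s i ≠ s (i - 1))

/-- The states `|P_K; ε⟩`, indexed by the word `s` of types instead of `(P, K)`. -/
def chi {n : ℕ} (s : Fin (n + 1) → Bool) (ε : Fin (n + 1) → Bool) :
    (Fin (n + 1) → Fin 3) → ℂ :=
  prodState (n + 1) (flips s) (s 0) ε

/-- The factor `g_i` as a function of whether `i ∈ K`, of the type at `i`, of the sign at `i` and of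
the value at `i`. -/
def factor (k h e : Bool) (t : Fin 3) : ℂ :=
  if k then
    (if h then (if t = 1 then 1 else if t = 2 then (if e then 1 else -1) else 0)
     else (if t = 0 then 1 else if t = 1 then (if e then 1 else -1) else 0))
  else
    (if h then (if t = 2 then 1 else 0) else (if t = 0 then 1 else 0))

/-! ### Cubes as cyclic words -/

/-- The change indicators multiply to `∏ i, (±1)_{s i} (±1)_{s (i - 1)} = 1`. -/
lemma even_flips {n : ℕ} (s : Fin (n + 1) → Bool) : Even (flips s).card := by
  let z : Bool → ℤ := fun b => if b then 1 else -1
  have h1 : ∏ i, (z (s i) * z (s (i - 1))) = 1 := by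
    rw [Finset.prod_mul_distrib]
    have h2 : ∏ i, z (s (i - 1)) = ∏ i, z (s i) :=
      Equiv.prod_comp (Equiv.subRight (1 : Fin (n + 1))) (fun i => z (s i))
    rw [h2, ← Finset.prod_mul_distrib]
    refine Finset.prod_eq_one fun i _ => ?_
    cases s i <;> simp [z]
  have h3 : ∏ i, (z (s i) * z (s (i - 1))) = (-1) ^ (flips s).card := by
    rw [flips, Finset.card_filter, ← Finset.prod_pow_eq_pow_sum]
    refine Finset.prod_congr rfl fun i _ => ?_
    cases s i <;> cases s (i - 1) <;> simp [z]
  rw [h3] at h1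
  exact (neg_one_pow_eq_one_iff_even (by norm_num)).1 h1

lemma side_flips {n : ℕ} (s : Fin (n + 1) → Bool) (k : ℕ) (hk : k < n + 1) :
    side (n + 1) (flips s) (s 0) k = s ⟨k, hk⟩ := by
  induction k with
  | zero => rfl
  | succ k ih =>
    have hk' : k < n + 1 := by omega
    have hpred : (⟨k + 1, hk⟩ : Fin (n + 1)) - 1 = ⟨k, hk'⟩ := by
      rw [sub_eq_iff_eq_add]
      ext
      rw [Fin.val_add_one_of_lt' (by simpa using hk)]
    have hmem : (k + 1 ∈ (flips s).image Fin.val) ↔ s ⟨k + 1, hk⟩ ≠ s ⟨k, hk'⟩ := by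
      rw [Finset.mem_image, ← hpred]
      constructor
      · rintro ⟨a, ha, hak⟩
        have : a = ⟨k + 1, hk⟩ := Fin.ext hak
        subst this
        simpa [flips] using ha
      · intro h
        exact ⟨⟨k + 1, hk⟩, by simpa [flips] using h, rfl⟩
    rw [side, ih hk']
    simp only [hmem]
    cases s ⟨k, hk'⟩ <;> cases s ⟨k + 1, hk⟩ <;> simp

lemma chi_apply {n : ℕ} (s ε : Fin (n + 1) → Bool) (v : Fin (n + 1) → Fin 3) :
    chi s ε v = ∏ i, factor (decide (s i ≠ s (i - 1))) (s i) (ε i) (v i) := by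
  unfold chi prodState
  refine Finset.prod_congr rfl fun i _ => ?_
  simp only [gfun, side_flips s i.val i.isLt, factor, sgn]
  have h : i ∈ flips s ↔ s i ≠ s (i - 1) := by simp [flips]
  simp only [h, Fin.eta, decide_eq_true_eq]
  split_ifs <;> simp [*]

lemma chi_mem_setO {n : ℕ} (s ε : Fin (n + 1) → Bool) : chi s ε ∈ setO (n + 1) :=
  ⟨flips s, s 0, ε, even_flips s, rfl⟩

lemma conj_chi {n : ℕ} (s ε : Fin (n + 1) → Bool) (v : Fin (n + 1) → Fin 3) :
    (starRingEnd ℂ) (chi s ε v) = chi s ε v := by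
  rw [chi_apply, map_prod]
  refine Finset.prod_congr rfl fun i _ => ?_
  unfold factor
  split_ifs <;> simp

lemma mem_iff_chi_ne_zero {n : ℕ} (s ε : Fin (n + 1) → Bool) (v : Fin (n + 1) → Fin 3) :
    Mem v s ↔ chi s ε v ≠ 0 := by
  rw [chi_apply, Finset.prod_ne_zero_iff]
  simp only [Finset.mem_univ, true_implies]
  refine forall_congr' fun i => ?_
  generalize v i = t
  unfold factor
  cases s i <;> cases s (i - 1) <;> cases ε i <;> fin_cases t <;> simp

open scoped Fin.CommRing Fin.NatCast in
/-- Induction along the cycle, starting from `m`. -/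
lemma cyclic_induction {n : ℕ} (m : Fin (n + 1)) {p : Fin (n + 1) → Prop} (h0 : p m)
    (hs : ∀ i, p (i - 1) → p i) (i : Fin (n + 1)) : p i := by
  have key : ∀ k : ℕ, p (m + (k : Fin (n + 1))) := by
    intro k
    induction k with
    | zero => simpa using h0
    | succ k ih =>
      apply hs
      have : m + ((k + 1 : ℕ) : Fin (n + 1)) - 1 = m + (k : Fin (n + 1)) := by
        push_cast; ring
      rwa [this]
  have := key (i - m).val
  rwa [Fin.cast_val_eq_self, add_sub_cancel] at this

lemma mem_unique {n : ℕ} {m : Fin (n + 1)} {v : Fin (n + 1) → Fin 3}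
    {s s' : Fin (n + 1) → Bool} (hs : Mem v s) (hs' : Mem v s') (hm : v m ≠ 1) : s = s' := by
  have dich : ∀ i, v i ≠ 1 → s i = s' i := by
    intro i hi
    have h := hs i
    have h' := hs' i
    generalize v i = t at *
    fin_cases t <;> simp_all
  funext i
  refine cyclic_induction m (p := fun i => s i = s' i) (dich m hm) (fun i ih => ?_) i
  by_cases hi : v i = 1
  · have h := (hs i).2.2 hi
    have h' := (hs' i).2.2 hi
    rw [← ih] at h'
    rw [Bool.eq_not_of_ne h, Bool.eq_not_of_ne h']
  · exact dich i hi

open scoped Fin.CommRing Fin.NatCast in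
/-- The word of the cube containing `v`, read cyclically from `m`: the `k`-th value is the type of
the component at `m + k`. -/
def readWord {n : ℕ} (m : Fin (n + 1)) (v : Fin (n + 1) → Fin 3) : ℕ → Bool
  | 0 => decide (v m = 2)
  | k + 1 =>
    if v (m + ((k + 1 : ℕ) : Fin (n + 1))) = 0 then false
    else if v (m + ((k + 1 : ℕ) : Fin (n + 1))) = 2 then true
    else !readWord m v k

open scoped Fin.CommRing Fin.NatCast in
lemma exists_mem {n : ℕ} {m : Fin (n + 1)} {v : Fin (n + 1) → Fin 3} (hm : v m ≠ 1) :
    ∃ s, Mem v s := by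
  refine ⟨fun i => readWord m v (i - m).val, fun i => ?_⟩
  by_cases hi : i = m
  · subst hi
    simp only [sub_self, Fin.val_zero, readWord]
    refine ⟨fun h => by simp [h], fun h => by simp [h], fun h => absurd h hm⟩
  · have hne : i - m ≠ 0 := sub_ne_zero.2 hi
    obtain ⟨k, hk⟩ : ∃ k, (i - m).val = k + 1 :=
      Nat.exists_eq_succ_of_ne_zero (fun h => hne (Fin.ext h))
    have hik : m + ((k + 1 : ℕ) : Fin (n + 1)) = i := by
      rw [← hk, Fin.cast_val_eq_self, add_sub_cancel]
    have hkn : k < n + 1 := by have := (i - m).isLt; omega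
    have hpred : (i - 1 - m).val = k := by
      have : i - 1 - m = (k : Fin (n + 1)) := by
        rw [← hik]; push_cast; ring
      rw [this, Fin.val_natCast, Nat.mod_eq_of_lt hkn]
    simp only [hk, hpred, readWord, hik]
    generalize v i = t
    fin_cases t <;> simp

/-! ### Consequences of orthogonality for the entries of `E` -/

/-- Completeness of the states of a cube. Each state is counted once for every extension of its sign
vector from `K` to all positions, which makes the normalisation `2 ^ (n + 1)` uniform in `K`. -/
lemma completeness {n : ℕ} {s : Fin (n + 1) → Bool} {a : Fin (n + 1) → Fin 3} (ha : Mem a s)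
    (v : Fin (n + 1) → Fin 3) :
    ∑ ε, chi s ε a * chi s ε v = if v = a then 2 ^ (n + 1) else 0 := by
  simp only [chi_apply, ← Finset.prod_mul_distrib]
  have hswap := Finset.prod_univ_sum (fun _ : Fin (n + 1) => (Finset.univ : Finset Bool))
    (fun i e => factor (decide (s i ≠ s (i - 1))) (s i) e (a i) *
      factor (decide (s i ≠ s (i - 1))) (s i) e (v i))
  rw [Fintype.piFinset_univ] at hswap
  rw [← hswap]
  have hloc : ∀ i, ∑ e, factor (decide (s i ≠ s (i - 1))) (s i) e (a i) *
      factor (decide (s i ≠ s (i - 1))) (s i) e (v i) = if v i = a i then 2 else 0 := by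
    intro i
    have h := ha i
    revert h
    clear hswap
    generalize v i = t
    generalize a i = t'
    unfold factor
    cases s i <;> cases s (i - 1) <;> fin_cases t' <;> fin_cases t <;> simp <;> norm_num
  simp only [hloc]
  split_ifs with h
  · simp [h]
  · obtain ⟨i, hi⟩ := Function.ne_iff.1 h
    exact Finset.prod_eq_zero (Finset.mem_univ i) (by simp [hi])

section

variable {n : ℕ} {m : Fin (n + 1)}
  {E : Matrix ({i : Fin (n + 1) // i ≠ m} → Fin 3) ({i : Fin (n + 1) // i ≠ m} → Fin 3) ℂ}

/-- An entry of `I ⊗ E`, expanded in the states of the cubes of its row and column. -/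
lemma expansion {s s' : Fin (n + 1) → Bool} {a a' : Fin (n + 1) → Fin 3} (ha : Mem a s)
    (ha' : Mem a' s') (hm : a m = a' m) :
    ∑ ε, ∑ ε', chi s ε a * chi s' ε' a' * innerH (n + 1) (chi s ε) (opIE (n + 1) m E (chi s' ε'))
      = 2 ^ (n + 1) * 2 ^ (n + 1) * E (res (n + 1) m a) (res (n + 1) m a') := by
  have hterm : ∀ ε ε', chi s ε a * chi s' ε' a' *
      innerH (n + 1) (chi s ε) (opIE (n + 1) m E (chi s' ε')) =
      ∑ v, ∑ v', (if v' m = v m then E (res (n + 1) m v) (res (n + 1) m v') else 0) *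
        ((chi s ε a * chi s ε v) * (chi s' ε' a' * chi s' ε' v')) := by
    intro ε ε'
    simp only [innerH, opIE, conj_chi, Finset.mul_sum]
    refine Finset.sum_congr rfl fun v _ => Finset.sum_congr rfl fun v' _ => ?_
    split_ifs <;> ring
  simp only [hterm]
  calc _ = ∑ v, ∑ v', (if v' m = v m then E (res (n + 1) m v) (res (n + 1) m v') else 0) *
        ((∑ ε, chi s ε a * chi s ε v) * (∑ ε', chi s' ε' a' * chi s' ε' v')) := by
        simp_rw [Finset.sum_mul_sum, Finset.mul_sum]
        rw [Finset.sum_congr rfl fun ε _ => Finset.sum_comm, Finset.sum_comm]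
        refine Finset.sum_congr rfl fun v _ => ?_
        rw [Finset.sum_congr rfl fun ε _ => Finset.sum_comm, Finset.sum_comm]
    _ = _ := by
        simp only [completeness ha, completeness ha']
        rw [Finset.sum_eq_single a, Finset.sum_eq_single a']
        · simp [hm]; ring
        · intro b _ hb; simp [hb]
        · simp
        · intro b _ hb; simp [hb]
        · simp

lemma entry_eq_zero
    (horth : ∀ ψ ∈ setO (n + 1), ∀ φ ∈ setO (n + 1), ψ ≠ φ →
      innerH (n + 1) ψ (opIE (n + 1) m E φ) = 0)
    {s s' : Fin (n + 1) → Bool} {a a' : Fin (n + 1) → Fin 3} (ha : Mem a s)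
    (ha' : Mem a' s') (hm : a m = a' m) (hm1 : a m ≠ 1) (hne : s ≠ s') :
    E (res (n + 1) m a) (res (n + 1) m a') = 0 := by
  have h := expansion (E := E) ha ha' hm
  rw [Finset.sum_eq_zero] at h
  · simpa using h.symm
  · intro ε _
    refine Finset.sum_eq_zero fun ε' _ => ?_
    rw [horth _ (chi_mem_setO s ε) _ (chi_mem_setO s' ε'), mul_zero]
    intro heq
    -- Equal states would have equal supports, but `a` lies in one cube only.
    have h1 : chi s' ε' a ≠ 0 := heq ▸ (mem_iff_chi_ne_zero s ε a).1 ha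
    exact hne (mem_unique ha ((mem_iff_chi_ne_zero s' ε' a).2 h1) hm1)

/-- Moving within a cube to the value `1` at `i` multiplies a state by its sign at `i`. -/
lemma chi_update (s ε : Fin (n + 1) → Bool) {a : Fin (n + 1) → Fin 3} (ha : Mem a s)
    {i : Fin (n + 1)} (hi : s i ≠ s (i - 1)) (hai : a i ≠ 1) :
    chi s ε (Function.update a i 1) = (if ε i then 1 else -1) * chi s ε a := by
  rw [chi_apply, chi_apply, ← Finset.mul_prod_erase _ _ (Finset.mem_univ i),
    ← Finset.mul_prod_erase Finset.univ (fun j => factor _ _ _ (a j)) (Finset.mem_univ i),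
    ← mul_assoc]
  congr 1
  · have h := ha i
    rw [Function.update_self]
    revert h hi hai
    generalize a i = t
    unfold factor
    cases s i <;> cases s (i - 1) <;> cases ε i <;> fin_cases t <;> simp
  · refine Finset.prod_congr rfl fun j hj => ?_
    rw [Function.update_of_ne (Finset.ne_of_mem_erase hj)]

lemma mem_update {s : Fin (n + 1) → Bool} {a : Fin (n + 1) → Fin 3} (ha : Mem a s)
    {i : Fin (n + 1)} (hi : s i ≠ s (i - 1)) : Mem (Function.update a i 1) s := by
  intro j
  by_cases hj : j = i
  · subst hj
    simp [hi]
  · rw [Function.update_of_ne hj]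
    exact ha j

lemma entry_eq_update
    (horth : ∀ ψ ∈ setO (n + 1), ∀ φ ∈ setO (n + 1), ψ ≠ φ →
      innerH (n + 1) ψ (opIE (n + 1) m E φ) = 0)
    {s : Fin (n + 1) → Bool} {a a' : Fin (n + 1) → Fin 3} (ha : Mem a s)
    (ha' : Mem a' s) (hm : a m = a' m) {i : Fin (n + 1)} (him : i ≠ m)
    (hi : s i ≠ s (i - 1)) (hai : a i ≠ 1) (hai' : a' i ≠ 1) :
    E (res (n + 1) m a) (res (n + 1) m a') =
      E (res (n + 1) m (Function.update a i 1)) (res (n + 1) m (Function.update a' i 1)) := by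
  have h := expansion (E := E) ha ha' hm
  have h' := expansion (E := E) (mem_update ha hi) (mem_update ha' hi)
    (by rwa [Function.update_of_ne him.symm, Function.update_of_ne him.symm])
  have h2 : (2 : ℂ) ^ (n + 1) * 2 ^ (n + 1) ≠ 0 := by simp
  apply mul_left_cancel₀ h2
  rw [← h, ← h']
  refine Finset.sum_congr rfl fun ε _ => Finset.sum_congr rfl fun ε' _ => ?_
  -- Equal states may have sign vectors that differ outside `K`; rewriting with the equality of the
  -- states first makes the factor a square.
  by_cases heq : chi s ε = chi s ε'
  · rw [← heq, chi_update s ε ha hi hai, chi_update s ε ha' hi hai']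
    split_ifs <;> ring
  · rw [horth _ (chi_mem_setO s ε) _ (chi_mem_setO s ε') heq, mul_zero, mul_zero]

/-! ### The induction on the number of entries different from `1` -/

/-- The vector with value `x` at `m` and with the values of `u` elsewhere. -/
def ext (m : Fin (n + 1)) (x : Fin 3) (u : {i : Fin (n + 1) // i ≠ m} → Fin 3) :
    Fin (n + 1) → Fin 3 :=
  fun i => if h : i = m then x else u ⟨i, h⟩

lemma ext_self (x : Fin 3) (u : {i : Fin (n + 1) // i ≠ m} → Fin 3) : ext m x u m = x := by
  simp [ext]

lemma ext_of_ne (x : Fin 3) (u : {i : Fin (n + 1) // i ≠ m} → Fin 3)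
    (j : {i : Fin (n + 1) // i ≠ m}) : ext m x u j = u j := by
  simp [ext, j.2]

lemma res_ext (x : Fin 3) (u : {i : Fin (n + 1) // i ≠ m} → Fin 3) :
    res (n + 1) m (ext m x u) = u :=
  funext fun j => ext_of_ne x u j

lemma res_update_ext (x : Fin 3) (u : {i : Fin (n + 1) // i ≠ m} → Fin 3)
    (j : {i : Fin (n + 1) // i ≠ m}) :
    res (n + 1) m (Function.update (ext m x u) j 1) = Function.update u j 1 := by
  funext l
  by_cases h : l = j
  · subst h; simp [res]
  · rw [Function.update_of_ne h, res, Function.update_of_ne (fun h' => h (Subtype.ext h')),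
      ext_of_ne]

/-- A value other than `1` at `i` is determined by the type of the cube at `i`. -/
lemma Mem.eq_of_ne_one {s : Fin (n + 1) → Bool} {a : Fin (n + 1) → Fin 3} (ha : Mem a s)
    {i : Fin (n + 1)} (hi : a i ≠ 1) : a i = if s i then 2 else 0 := by
  have h := ha i
  generalize a i = t at *
  fin_cases t <;> simp_all

lemma entry_eq
    (horth : ∀ ψ ∈ setO (n + 1), ∀ φ ∈ setO (n + 1), ψ ≠ φ →
      innerH (n + 1) ψ (opIE (n + 1) m E φ) = 0) (k : ℕ) :
    ∀ u w : {i : Fin (n + 1) // i ≠ m} → Fin 3,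
      (Finset.univ.filter fun j => u j ≠ 1).card = k →
      E u w = if u = w then E (fun _ => 1) (fun _ => 1) else 0 := by
  induction k using Nat.strong_induction_on with
  | _ k ih =>
  intro u w hk
  have hex : ∀ (x : Fin 3) (_ : x ≠ 1) (u : {i : Fin (n + 1) // i ≠ m} → Fin 3),
      ∃ s, Mem (ext m x u) s :=
    fun x hx u => exists_mem (m := m) (by rwa [ext_self])
  obtain ⟨s₀, hs₀⟩ := hex 0 (by decide) u
  obtain ⟨s₂, hs₂⟩ := hex 2 (by decide) u
  -- If `w` has another word than `u`, then the entry vanishes.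
  have hdiff : ∀ (x : Fin 3) (_ : x ≠ 1) (s : _) (_ : Mem (ext m x u) s),
      ¬ Mem (ext m x w) s → E u w = if u = w then E (fun _ => 1) (fun _ => 1) else 0 := by
    intro x hx s hs hns
    obtain ⟨s', hs'⟩ := hex x hx w
    have hss : s ≠ s' := fun h => hns (h ▸ hs')
    have huw : u ≠ w := fun h => hns (h ▸ hs)
    have := entry_eq_zero horth hs hs' (by rw [ext_self, ext_self]) (by rwa [ext_self]) hss
    rw [res_ext, res_ext] at this
    rw [if_neg huw, this]
  by_cases hw₀ : Mem (ext m 0 w) s₀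
  swap
  · exact hdiff 0 (by decide) s₀ hs₀ hw₀
  by_cases hw₂ : Mem (ext m 2 w) s₂
  swap
  · exact hdiff 2 (by decide) s₂ hs₂ hw₂
  -- Where `s₀` and `s₂` differ, a common member of both cubes has the value `1`.
  have hone : ∀ (u : {i : Fin (n + 1) // i ≠ m} → Fin 3), Mem (ext m 0 u) s₀ →
      Mem (ext m 2 u) s₂ → ∀ j : {i : Fin (n + 1) // i ≠ m}, s₀ j ≠ s₂ j → u j = 1 := by
    intro u h₀ h₂ j hj
    have h0 := h₀ j
    have h2 := h₂ j
    rw [ext_of_ne] at h0 h2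
    generalize u j = t at *
    fin_cases t <;> simp_all
  have hstart : s₀ m ≠ s₂ m := by
    rw [(hs₀ m).1 (ext_self _ _), (hs₂ m).2.1 (ext_self _ _)]
    decide
  by_cases hall : ∀ i, s₀ i ≠ s₂ i
  · have hu : u = fun _ => 1 := funext fun j => hone u hs₀ hs₂ j (hall j)
    have hw : w = fun _ => 1 := funext fun j => hone w hw₀ hw₂ j (hall j)
    rw [hu, hw, if_pos rfl]
  -- The first position after `m` at which the words agree.
  obtain ⟨i, hprev, hi⟩ : ∃ i, s₀ (i - 1) ≠ s₂ (i - 1) ∧ s₀ i = s₂ i := by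
    by_contra! hno
    exact hall (cyclic_induction m (p := fun i => s₀ i ≠ s₂ i) hstart hno)
  have him : i ≠ m := fun h => hstart (h ▸ hi)
  have hne1 : ∀ (u : {i : Fin (n + 1) // i ≠ m} → Fin 3), Mem (ext m 0 u) s₀ →
      Mem (ext m 2 u) s₂ → u ⟨i, him⟩ ≠ 1 := by
    intro u h₀ h₂ hu1
    have h0 := (h₀ i).2.2 ((ext_of_ne 0 u ⟨i, him⟩).trans hu1)
    have h2 := (h₂ i).2.2 ((ext_of_ne 2 u ⟨i, him⟩).trans hu1)
    rw [← hi] at h2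
    exact hprev ((Bool.eq_not_of_ne h0.symm).trans (Bool.eq_not_of_ne h2.symm).symm)
  have hu1 := hne1 u hs₀ hs₂
  have hw1 := hne1 w hw₀ hw₂
  have huw : u ⟨i, him⟩ = w ⟨i, him⟩ := by
    have e1 := hs₀.eq_of_ne_one (i := i) (by rwa [ext_of_ne 0 u ⟨i, him⟩])
    have e2 := hw₀.eq_of_ne_one (i := i) (by rwa [ext_of_ne 0 w ⟨i, him⟩])
    rw [ext_of_ne 0 _ ⟨i, him⟩] at e1 e2
    rw [e1, e2]
  have hstep : ∀ (x : Fin 3) (s : Fin (n + 1) → Bool), Mem (ext m x u) s → Mem (ext m x w) s →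
      s i ≠ s (i - 1) →
      E u w = E (Function.update u ⟨i, him⟩ 1) (Function.update w ⟨i, him⟩ 1) := by
    intro x s hu hw hsi
    have := entry_eq_update horth hu hw (by rw [ext_self, ext_self]) him hsi
      (by rwa [ext_of_ne x u ⟨i, him⟩]) (by rwa [ext_of_ne x w ⟨i, him⟩])
    rwa [res_ext, res_ext, res_update_ext x u ⟨i, him⟩, res_update_ext x w ⟨i, him⟩] at this
  have hred : E u w = E (Function.update u ⟨i, him⟩ 1) (Function.update w ⟨i, him⟩ 1) := by
    by_cases h0 : s₀ i = s₀ (i - 1)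
    · exact hstep 2 s₂ hs₂ hw₂ (by rw [← hi, h0]; exact hprev)
    · exact hstep 0 s₀ hs₀ hw₀ h0
  have hcard : (Finset.univ.filter fun j => Function.update u ⟨i, him⟩ 1 j ≠ 1).card < k := by
    rw [← hk]
    refine Finset.card_lt_card (Finset.ssubset_iff_of_subset ?_ |>.2 ⟨⟨i, him⟩, ?_, ?_⟩)
    · intro j hj
      by_cases h : j = ⟨i, him⟩
      · subst h; simp at hj
      · simpa [Function.update_of_ne h] using hj
    · simpa using hu1
    · simp
  rw [hred, ih _ hcard _ _ rfl]
  refine if_congr ⟨fun h => funext fun j => ?_, fun h => by rw [h]⟩ rfl rfl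
  by_cases hj : j = ⟨i, him⟩
  · rw [hj, huw]
  · simpa [Function.update_of_ne hj] using congrFun h j

end

/-- Strong nonlocality of the orthogonal product set `O` of size `3^N - 1`:
for every subsystem `m` and every positive semidefinite operator `E = M†M`
acting on the joint party of the remaining `N - 1` subsystems, if
`⟨ψ, (I_m ⊗ E) φ⟩ = 0` for all distinct `ψ, φ ∈ O`, then `E` is proportional
to the identity. -/
theorem strongly_nonlocal_OPS (N : ℕ) (hodd : Odd N) (hN : 3 ≤ N) (m : Fin N)
    (E : Matrix ({i : Fin N // i ≠ m} → Fin 3) ({i : Fin N // i ≠ m} → Fin 3) ℂ)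
    (hE : ∃ M : Matrix ({i : Fin N // i ≠ m} → Fin 3) ({i : Fin N // i ≠ m} → Fin 3) ℂ,
        E = Mᴴ * M)
    (horth : ∀ ψ ∈ setO N, ∀ φ ∈ setO N, ψ ≠ φ → innerH N ψ (opIE N m E φ) = 0) :
    ∃ c : ℂ, E = c • (1 : Matrix ({i : Fin N // i ≠ m} → Fin 3)
        ({i : Fin N // i ≠ m} → Fin 3) ℂ) := by
  obtain ⟨n, rfl⟩ : ∃ n, N = n + 1 := ⟨N - 1, by omega⟩
  refine ⟨E (fun _ => 1) (fun _ => 1), Matrix.ext fun u w => ?_⟩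
  rw [entry_eq horth _ u w rfl, Matrix.smul_apply, Matrix.one_apply]
  simp

end SNL
end

section
/- (Block Trivial Lemma) Let E = M†M for some matrix M ∈ M_n(ℂ). Let S ⊆ {0,…,n−1} with |S| = s, and let ψ_0,…,ψ_{s−1} be pairwise orthogonal nonzero vectors supported on S such that ⟨ψ_i, E ψ_j⟩ = 0 for all i ≠ j. Suppose there exists u ∈ S such that E_{u,w} = 0 for all w ∈ S ∖ {u} and ⟨e_u, ψ_j⟩ ≠ 0 for all j ∈ {0,…,s−1}, where e_u is the u-th standard basis vector. Then E[S,S] is a scalar multiple of the s × s identity matrix. -/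
open scoped BigOperators Matrix

/-!
Let `P` be the square matrix whose columns are the `ψ_j` restricted to `S`, and `F = E[S,S]`.
Orthogonality says that `Pᴴ P` is diagonal, with nonzero diagonal since `ψ_j(u) ≠ 0`, so
`P` is invertible; the second orthogonality says that `Pᴴ F P` is diagonal. Hence
`F P = P Λ` with `Λ` diagonal: the `ψ_j` form an eigenbasis of `F`. Comparing the `u`-th
rows, `F_{uu} ψ_j(u) = ψ_j(u) λ_j`, and `ψ_j(u) ≠ 0` forces every eigenvalue `λ_j` to equal
`F_{uu}`. So `F` is scalar.
-/

open scoped ComplexOrder in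
/-- If the columns of `P` are orthogonal, `Pᴴ F P` is diagonal, the `u`-th row of `F` vanishes
off the diagonal and the `u`-th row of `P` has no zero entry, then `F` is scalar. -/
lemma eq_smul_one_of_orthogonal_columns {ι : Type*} [Fintype ι] [DecidableEq ι]
    (P F : Matrix ι ι ℂ) (u : ι)
    (hP : (Pᴴ * P).IsDiag) (hF : (Pᴴ * (F * P)).IsDiag)
    (hrow : ∀ w, w ≠ u → F u w = 0) (hne : ∀ j, P u j ≠ 0) :
    F = F u u • (1 : Matrix ι ι ℂ) := by
  obtain ⟨d, hd⟩ : ∃ d, Pᴴ * P = Matrix.diagonal d := ⟨_, hP.diagonal_diag.symm⟩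
  obtain ⟨d', hd'⟩ : ∃ d, Pᴴ * (F * P) = Matrix.diagonal d := ⟨_, hF.diagonal_diag.symm⟩
  -- The squared norm of a column is nonzero because its `u`-th entry is.
  have hd0 : ∀ j, d j ≠ 0 := by
    intro j h0
    have h : (Pᴴ * P) j j = 0 := by rw [hd, Matrix.diagonal_apply_eq, h0]
    have h2 : star (fun a => P a j) ⬝ᵥ (fun a => P a j) = 0 := h
    have h3 : (fun a => P a j) = 0 :=
      dotProduct_star_self_eq_zero.mp h2
    exact hne j (congrFun h3 u)
  have hdet : IsUnit (Pᴴ * P).det := by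
    rw [hd, Matrix.det_diagonal]
    exact isUnit_iff_ne_zero.mpr (Finset.prod_ne_zero_iff.mpr fun j _ => hd0 j)
  rw [Matrix.det_mul] at hdet
  have hU : IsUnit Pᴴ := (Matrix.isUnit_iff_isUnit_det _).mpr (isUnit_of_mul_isUnit_left hdet)
  have hV : IsUnit P := (Matrix.isUnit_iff_isUnit_det _).mpr (isUnit_of_mul_isUnit_right hdet)
  have hFP : F * P = P * Matrix.diagonal (fun j => d' j / d j) := by
    apply hU.mul_left_cancel
    rw [hd', ← Matrix.mul_assoc, hd, Matrix.diagonal_mul_diagonal]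
    congr 1
    funext j
    exact (mul_div_cancel₀ _ (hd0 j)).symm
  have hlam : ∀ j, d' j / d j = F u u := by
    intro j
    have h := congrFun (congrFun hFP u) j
    rw [Matrix.mul_diagonal, Matrix.mul_apply,
      Finset.sum_eq_single u (fun w _ hw => by rw [hrow w hw, zero_mul])
        (fun h => absurd (Finset.mem_univ u) h), mul_comm] at h
    exact (mul_left_cancel₀ (hne j) h).symm
  apply hV.mul_right_cancel
  rw [hFP]
  ext a j
  rw [Matrix.mul_diagonal, hlam, Matrix.smul_mul, Matrix.one_mul, Matrix.smul_apply, smul_eq_mul,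
    mul_comm]

/-- **Block Trivial Lemma.**  Let `E = M†M`, let `S` be a set of indices with
`|S| = s`, and let `ψ₀, …, ψ_{s-1}` be pairwise orthogonal nonzero vectors
supported on `S` with `⟨ψ_i, E ψ_j⟩ = 0` for `i ≠ j`.  If there is `u ∈ S` with
`E_{u,w} = 0` for all `w ∈ S ∖ {u}` and `⟨e_u, ψ_j⟩ = ψ_j(u) ≠ 0` for all `j`,
then the block `E[S,S]` is a scalar multiple of the identity. -/
theorem block_trivial_lemma (n s : ℕ) (hn : 1 ≤ n)
    (M E : Matrix (Fin n) (Fin n) ℂ) (hE : E = Mᴴ * M)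
    (S : Finset (Fin n)) (hs : S.card = s)
    (ψ : Fin s → Fin n → ℂ)
    (hψ0 : ∀ j, ψ j ≠ 0)
    (hψS : ∀ j, ∀ a : Fin n, a ∉ S → ψ j a = 0)
    (hψorth : ∀ i j, i ≠ j → ∑ a, (starRingEnd ℂ) (ψ i a) * ψ j a = 0)
    (hEorth : ∀ i j, i ≠ j → ∑ a, (starRingEnd ℂ) (ψ i a) * (E.mulVec (ψ j)) a = 0)
    (u : Fin n) (hu : u ∈ S)
    (hrow : ∀ w ∈ S, w ≠ u → E u w = 0)
    (hne : ∀ j, ψ j u ≠ 0) :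
    ∃ c : ℂ, ∀ a ∈ S, ∀ b ∈ S, E a b = if a = b then c else 0 := by
  have e : Fin s ≃ S := (S.equivFinOfCardEq hs).symm
  -- A sum of terms vanishing off `S` is a sum over `Fin s`.
  have hsum : ∀ f : Fin n → ℂ, (∀ a, a ∉ S → f a = 0) → ∑ a, f a = ∑ k, f (e k) := by
    intro f hf
    rw [e.sum_comp (fun x : S => f x), Finset.sum_coe_sort S f]
    exact (Finset.sum_subset (Finset.subset_univ S) fun a _ ha => hf a ha).symm
  let P : Matrix (Fin s) (Fin s) ℂ := Matrix.of fun k j => ψ j (e k)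
  let F : Matrix (Fin s) (Fin s) ℂ := E.submatrix (fun k => e k) (fun k => e k)
  have hu' : ((e (e.symm ⟨u, hu⟩) : S) : Fin n) = u := by simp
  have hP : (Pᴴ * P).IsDiag := by
    intro i j hij
    rw [← hψorth i j hij, hsum _ fun a ha => by rw [hψS j a ha, mul_zero]]
    rfl
  have hF : (Pᴴ * (F * P)).IsDiag := by
    intro i j hij
    rw [← hEorth i j hij, hsum _ fun a ha => by rw [hψS i a ha, map_zero, zero_mul]]
    rw [Matrix.mul_apply]
    refine Finset.sum_congr rfl fun k _ => congrArg ((starRingEnd ℂ) (ψ i (e k)) * ·) ?_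
    exact (hsum (fun b => E (e k) b * ψ j b) fun b hb => by rw [hψS j b hb, mul_zero]).symm
  have key := eq_smul_one_of_orthogonal_columns P F (e.symm ⟨u, hu⟩) hP hF
    (fun w hw => by
      change E (e (e.symm ⟨u, hu⟩)) (e w) = 0
      rw [hu']
      refine hrow _ (e w).2 fun h => hw ?_
      rw [Equiv.eq_symm_apply]
      exact Subtype.ext h)
    (fun j => by
      change ψ j (e (e.symm ⟨u, hu⟩)) ≠ 0
      rw [hu']
      exact hne j)
  refine ⟨F (e.symm ⟨u, hu⟩) (e.symm ⟨u, hu⟩), fun a ha b hb => ?_⟩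
  have h := congrFun (congrFun key (e.symm ⟨a, ha⟩)) (e.symm ⟨b, hb⟩)
  have h1 : F (e.symm ⟨a, ha⟩) (e.symm ⟨b, hb⟩) = E a b := by simp [F]
  rw [← h1, h, Matrix.smul_apply, Matrix.one_apply]
  simp
end
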